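/- Let N ≥ 1, let L₁, …, L_N > 0, let f : ℝ → ℝ be continuously differentiable, and let u : ℝ^N → ℝ be a C³ function, periodic with period L_i in each coordinate direction, satisfying Δu + f(u) = 0 on ℝ^N. Set v = ‖∇u‖ (a Lipschitz function, differentiable almost everywhere) and Q = [0,L₁) × ⋯ × [0,L_N). Then ∫_Q ( ‖∇v(x)‖² − f'(u(x)) v(x)² ) dx = − ∫_{Q ∩ U} ‖∇u(x)‖² ‖DV(x)‖_F² dx, where ∇v is the a.e.-defined derivative of v, U = {x : ∇u(x) ≠ 0}, V = ∇u/‖∇u‖ on U, and ‖·‖_F is the Frobenius norm. -/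

import Mathlib

open RealInnerProductSpace MeasureTheory Filter

/-- The Hessian bilinear form of `u : ℝ^N → ℝ` at `x`, applied to `w₁, w₂`. -/
noncomputable def Hess {N : ℕ} (u : EuclideanSpace ℝ (Fin N) → ℝ)
    (x w₁ w₂ : EuclideanSpace ℝ (Fin N)) : ℝ :=
  fderiv ℝ (fun y => fderiv ℝ u y w₁) x w₂

/-- The Laplacian `Δu = tr Hess u`. -/
noncomputable def Lap {N : ℕ} (u : EuclideanSpace ℝ (Fin N) → ℝ)
    (x : EuclideanSpace ℝ (Fin N)) : ℝ :=
  ∑ i : Fin N, Hess u x (EuclideanSpace.single i 1) (EuclideanSpace.single i 1)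

/-- The normalized gradient `V = ∇u / ‖∇u‖` (junk value `0` where `∇u = 0`). -/
noncomputable def NGrad {N : ℕ} (u : EuclideanSpace ℝ (Fin N) → ℝ)
    (x : EuclideanSpace ℝ (Fin N)) : EuclideanSpace ℝ (Fin N) :=
  ‖gradient u x‖⁻¹ • gradient u x

/-- The squared Frobenius norm of a linear map on `ℝ^N`. -/
noncomputable def FrobSq {N : ℕ}
    (A : EuclideanSpace ℝ (Fin N) →L[ℝ] EuclideanSpace ℝ (Fin N)) : ℝ :=
  ∑ i : Fin N, ‖A (EuclideanSpace.single i 1)‖ ^ 2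

/-- The divergence `div Z = ∑ i ∂Zᵢ/∂xᵢ` of a vector field on `ℝ^N`. -/
noncomputable def Divg {N : ℕ} (Z : EuclideanSpace ℝ (Fin N) → EuclideanSpace ℝ (Fin N))
    (x : EuclideanSpace ℝ (Fin N)) : ℝ :=
  ∑ i : Fin N, ⟪fderiv ℝ Z x (EuclideanSpace.single i 1), EuclideanSpace.single i 1⟫

/-- The Frobenius inner product `⟨A, B⟩_F = ∑ᵢⱼ Aᵢⱼ Bᵢⱼ` of two linear maps on `ℝ^N`. -/
noncomputable def FrobInner {N : ℕ}
    (A B : EuclideanSpace ℝ (Fin N) →L[ℝ] EuclideanSpace ℝ (Fin N)) : ℝ :=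
  ∑ i : Fin N, ⟪A (EuclideanSpace.single i 1), B (EuclideanSpace.single i 1)⟫


abbrev s5box {N : ℕ} (L : Fin N → ℝ) : Set (EuclideanSpace ℝ (Fin N)) :=
  {y : EuclideanSpace ℝ (Fin N) | ∀ i, y i ∈ Set.Ico 0 (L i)}

lemma s5_meas {N : ℕ} (L : Fin N → ℝ) : MeasurableSet (s5box L) := by
  have : s5box L = ⋂ i, (fun y : EuclideanSpace ℝ (Fin N) => y i) ⁻¹' Set.Ico 0 (L i) := by
    ext y; simp [s5box]
  rw [this]
  refine MeasurableSet.iInter fun i => ?_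
  have hc : Continuous (fun y : EuclideanSpace ℝ (Fin N) => y i) := by fun_prop
  exact hc.measurable measurableSet_Ico

lemma s5_integrable {N : ℕ} (L : Fin N → ℝ) (h : EuclideanSpace ℝ (Fin N) → ℝ)
    (hc : Continuous h) : IntegrableOn h (s5box L) := by
  have hK : IsCompact (WithLp.toLp 2 '' (Set.Icc (0 : Fin N → ℝ) L) :
      Set (EuclideanSpace ℝ (Fin N))) :=
    isCompact_Icc.image (by fun_prop)
  refine (hc.continuousOn.integrableOn_compact hK).mono_set ?_
  intro y hy
  refine ⟨y.ofLp, ⟨fun i => (hy i).1, fun i => (hy i).2.le⟩, rfl⟩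

lemma s5_setint {N : ℕ} (L : Fin N → ℝ) (h : EuclideanSpace ℝ (Fin N) → ℝ) :
    ∫ x in s5box L, h x = ∫ x in Set.Icc (0 : Fin N → ℝ) L, h (WithLp.toLp 2 x) := by
  have e1 := (PiLp.volume_preserving_toLp (Fin N)).setIntegral_preimage_emb
    (MeasurableEquiv.toLp 2 (Fin N → ℝ)).measurableEmbedding h (s5box L)
  rw [← e1]
  have e2 : (WithLp.toLp 2 ⁻¹' s5box L : Set (Fin N → ℝ))
      = Set.pi Set.univ fun i => Set.Ico ((0 : Fin N → ℝ) i) (L i) := by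
    ext y; simp [s5box]
  rw [e2]
  exact setIntegral_congr_set Measure.univ_pi_Ico_ae_eq_Icc

lemma s5_div {n : ℕ} (L : Fin (n+1) → ℝ) (hL : ∀ i, 0 < L i)
    (W : Fin (n+1) → EuclideanSpace ℝ (Fin (n+1)) → ℝ) (hW : ∀ i, ContDiff ℝ 1 (W i))
    (hper : ∀ i x, W i (x + L i • EuclideanSpace.single i 1) = W i x) :
    ∫ x in s5box L, ∑ i, fderiv ℝ (W i) x (EuclideanSpace.single i 1) = 0 := by
  rw [s5_setint]
  have hd : ∀ i, Differentiable ℝ (W i) := fun i => (hW i).differentiable (by norm_num)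
  let T : (Fin (n+1) → ℝ) →L[ℝ] EuclideanSpace ℝ (Fin (n+1)) :=
    ((EuclideanSpace.equiv (Fin (n+1)) ℝ).symm : _ →L[ℝ] _)
  have hT : ∀ x, T x = WithLp.toLp 2 x := fun x => rfl
  have key := integral_divergence_of_hasFDerivAt_off_countable (a := 0) (b := L)
    (fun i => (hL i).le) (fun x i => W i (T x))
    (fun x => ContinuousLinearMap.pi fun i => (fderiv ℝ (W i) (T x)).comp T) ∅ Set.countable_empty
    (Continuous.continuousOn (continuous_pi fun i => (hd i).continuous.comp T.continuous))
    (fun x _ => hasFDerivAt_pi.2 fun i =>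
      ((hd i) (T x)).hasFDerivAt.comp x T.hasFDerivAt)
    (by
      refine Continuous.integrableOn_Icc ?_
      refine continuous_finsetSum _ fun i _ => ?_
      simp only [ContinuousLinearMap.coe_pi', ContinuousLinearMap.comp_apply]
      have := (hW i).continuous_fderiv (by norm_num)
      fun_prop)
  have hs : ∀ i, T (Pi.single i 1) = EuclideanSpace.single i 1 := fun i => rfl
  simp only [ContinuousLinearMap.coe_pi', ContinuousLinearMap.comp_apply, hs, hT] at key
  rw [key]
  refine Finset.sum_eq_zero fun i _ => ?_
  rw [sub_eq_zero]
  congr 1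
  ext x
  refine Eq.trans ?_ (hper i _)
  congr 1
  ext j
  rcases eq_or_ne j i with rfl | hj
  · simp
  · obtain ⟨k, rfl⟩ := Fin.exists_succAbove_eq hj
    simp

lemma s5_cd {E : Type*} [NormedAddCommGroup E] [NormedSpace ℝ E] {m k : ℕ} {h : E → ℝ}
    (hh : ContDiff ℝ m h) (hk : k + 1 ≤ m) (a : E) : ContDiff ℝ k (fun y => fderiv ℝ h y a) :=
  (hh.fderiv_right (by exact_mod_cast hk)).clm_apply contDiff_const

lemma s5_comm {E : Type*} [NormedAddCommGroup E] [NormedSpace ℝ E] {h : E → ℝ}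
    (hh : ContDiff ℝ 2 h) (a b x : E) :
    fderiv ℝ (fun y => fderiv ℝ h y a) x b = fderiv ℝ (fun y => fderiv ℝ h y b) x a := by
  have hd : DifferentiableAt ℝ (fderiv ℝ h) x :=
    (hh.fderiv_right (m := 1) (by norm_num)).differentiable (by norm_num) x
  have hc : ∀ c d, fderiv ℝ (fun y => fderiv ℝ h y c) x d = fderiv ℝ (fderiv ℝ h) x d c := by
    intro c d
    rw [fderiv_clm_apply hd (by fun_prop)]
    simp
  rw [hc, hc]
  exact (hh.contDiffAt.isSymmSndFDerivAt (by simp)) b a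

lemma s5_per {E : Type*} [NormedAddCommGroup E] [NormedSpace ℝ E] {h : E → ℝ} {c : E}
    (hh : ∀ x, h (x + c) = h x) (x : E) : fderiv ℝ h (x + c) = fderiv ℝ h x := by
  rw [← fderiv_comp_add_right]
  congr 1
  ext y; exact hh y

/-- the integral identity -/
lemma s5_main {n : ℕ} (L : Fin (n+1) → ℝ) (hL : ∀ i, 0 < L i)
    (f : ℝ → ℝ) (hf : ContDiff ℝ 1 f)
    (u : EuclideanSpace ℝ (Fin (n+1)) → ℝ) (hu : ContDiff ℝ 3 u)
    (hper : ∀ (x : EuclideanSpace ℝ (Fin (n+1))) (i : Fin (n+1)),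
      u (x + L i • EuclideanSpace.single i 1) = u x)
    (hpde : ∀ x, Lap u x + f (u x) = 0) :
    ∫ x in s5box L, (∑ i, ∑ j, (Hess u x (EuclideanSpace.single j 1) (EuclideanSpace.single i 1)) ^ 2
      - deriv f (u x) * ∑ j, (fderiv ℝ u x (EuclideanSpace.single j 1)) ^ 2) = 0 := by
  set e : Fin (n+1) → EuclideanSpace ℝ (Fin (n+1)) := fun i => EuclideanSpace.single i 1 with he
  let g : Fin (n+1) → EuclideanSpace ℝ (Fin (n+1)) → ℝ := fun j y => fderiv ℝ u y (e j)
  let H : Fin (n+1) → Fin (n+1) → EuclideanSpace ℝ (Fin (n+1)) → ℝ :=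
    fun i j y => fderiv ℝ (g j) y (e i)
  have hg : ∀ j, ContDiff ℝ 2 (g j) := fun j => s5_cd (m := 3) (k := 2) hu (by norm_num) _
  have hH : ∀ i j, ContDiff ℝ 1 (H i j) := fun i j =>
    s5_cd (m := 2) (k := 1) (hg j) (by norm_num) _
  have hgd : ∀ j x, DifferentiableAt ℝ (g j) x := fun j => (hg j).differentiable (by norm_num)
  have hHd : ∀ i j x, DifferentiableAt ℝ (H i j) x :=
    fun i j => (hH i j).differentiable (by norm_num)
  have hgp : ∀ i j x, g j (x + L i • e i) = g j x := fun i j x => by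
    simp only [g]; rw [s5_per (fun y => hper y i)]
  have hHp : ∀ k i j x, H i j (x + L k • e k) = H i j x := fun k i j x => by
    simp only [H]; rw [s5_per (fun y => hgp k j y)]
  have hsymm : ∀ i j, H i j = H j i := fun i j => by
    ext x; exact s5_comm (hu.of_le (by norm_num)) _ _ _
  have key := s5_div L hL (fun i x => ∑ j, g j x * H i j x)
    (fun i => ContDiff.sum fun j _ => ((hg j).of_le (by norm_num)).mul (hH i j))
    (fun i x => by
      refine Finset.sum_congr rfl fun j _ => ?_
      exact congrArg₂ _ (hgp i j x) (hHp i i j x))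
  rw [← key]
  congr 1
  ext x
  have h1 : ∀ i, fderiv ℝ (fun x => ∑ j, g j x * H i j x) x (e i)
      = ∑ j, (H i j x ^ 2 + g j x * fderiv ℝ (H i j) x (e i)) := by
    intro i
    rw [fderiv_fun_sum (fun j _ => (hgd j x).fun_mul (hHd i j x)), sum_apply]
    refine Finset.sum_congr rfl fun j _ => ?_
    rw [fderiv_fun_mul (hgd j x) (hHd i j x)]
    simp only [ContinuousLinearMap.add_apply, ContinuousLinearMap.smul_apply, smul_eq_mul]
    show g j x * _ + H i j x * H i j x = _
    ring
  have h2 : ∀ i j, fderiv ℝ (H i j) x (e i) = fderiv ℝ (H i i) x (e j) := by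
    intro i j
    rw [hsymm i j]
    exact s5_comm (hg i) _ _ _
  have h3 : ∀ j, ∑ i, fderiv ℝ (H i i) x (e j) = - (deriv f (u x) * g j x) := by
    intro j
    have hl : (fun y => ∑ i, H i i y) = fun y => - f (u y) := by
      ext y
      have := hpde y
      have h' : Lap u y = ∑ i, H i i y := rfl
      linarith
    have hl2 : fderiv ℝ (fun y => ∑ i, H i i y) x (e j) = ∑ i, fderiv ℝ (H i i) x (e j) := by
      rw [fderiv_fun_sum (fun i _ => hHd i i x), sum_apply]
    rw [← hl2, hl]
    have hfd : HasDerivAt f (deriv f (u x)) (u x) :=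
      (hf.differentiable (by norm_num) (u x)).hasDerivAt
    have hud : HasFDerivAt u (fderiv ℝ u x) x := (hu.differentiable (by norm_num) x).hasFDerivAt
    have hc := (hfd.comp_hasFDerivAt x hud).neg
    have hc' : fderiv ℝ (fun y => - f (u y)) x = _ := hc.fderiv
    rw [hc']
    simp [g]
  show ∑ i, ∑ j, H i j x ^ 2 - deriv f (u x) * ∑ j, g j x ^ 2 = ∑ i, fderiv ℝ (fun x => ∑ j, g j x * H i j x) x (e i)
  simp only [h1, Finset.sum_add_distrib]
  rw [sub_eq_add_neg]
  congr 1
  rw [Finset.sum_comm]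
  rw [Finset.mul_sum, ← Finset.sum_neg_distrib]
  refine Finset.sum_congr rfl fun j _ => ?_
  rw [← Finset.mul_sum, Finset.sum_congr rfl fun i _ => h2 i j, h3]
  ring

lemma s5_gradcoord {N : ℕ} (h : EuclideanSpace ℝ (Fin N) → ℝ) (x : EuclideanSpace ℝ (Fin N))
    (j : Fin N) : gradient h x j = fderiv ℝ h x (EuclideanSpace.single j 1) := by
  have := InnerProductSpace.toDual_symm_apply (𝕜 := ℝ) (x := EuclideanSpace.single j (1:ℝ))
    (y := fderiv ℝ h x)
  rw [← this, EuclideanSpace.inner_single_right]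
  simp [gradient]

lemma s5_normsq {N : ℕ} (h : EuclideanSpace ℝ (Fin N) → ℝ) (x : EuclideanSpace ℝ (Fin N)) :
    ‖gradient h x‖ ^ 2 = ∑ j, (fderiv ℝ h x (EuclideanSpace.single j 1)) ^ 2 := by
  rw [EuclideanSpace.norm_sq_eq]
  simp [s5_gradcoord]

lemma s5_Gcd {N : ℕ} {u : EuclideanSpace ℝ (Fin N) → ℝ} (hu : ContDiff ℝ 3 u) :
    ContDiff ℝ 2 (gradient u) :=
  (InnerProductSpace.toDual ℝ (EuclideanSpace ℝ (Fin N))).symm.toContinuousLinearEquiv.contDiff.comp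
    (hu.fderiv_right (by norm_num))

lemma s5_frobG {N : ℕ} {u : EuclideanSpace ℝ (Fin N) → ℝ} (hu : ContDiff ℝ 3 u)
    (x : EuclideanSpace ℝ (Fin N)) :
    FrobSq (fderiv ℝ (gradient u) x) = ∑ i, ∑ j, (Hess u x (EuclideanSpace.single j 1)
      (EuclideanSpace.single i 1)) ^ 2 := by
  unfold FrobSq
  refine Finset.sum_congr rfl fun i _ => ?_
  rw [EuclideanSpace.norm_sq_eq]
  refine Finset.sum_congr rfl fun j _ => ?_
  rw [Real.norm_eq_abs, sq_abs]
  congr 1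
  have hd : HasFDerivAt (gradient u) (fderiv ℝ (gradient u) x) x :=
    ((s5_Gcd hu).differentiable (by norm_num) x).hasFDerivAt
  have h2 := (EuclideanSpace.proj (𝕜 := ℝ) j).hasFDerivAt.comp x hd
  have h3 : (EuclideanSpace.proj (𝕜 := ℝ) j) ∘ gradient u
      = fun y => fderiv ℝ u y (EuclideanSpace.single j 1) := by
    ext y; exact s5_gradcoord u y j
  rw [h3] at h2
  unfold Hess
  rw [h2.fderiv]
  rfl

lemma s5_pt {N : ℕ} {u : EuclideanSpace ℝ (Fin N) → ℝ} (hu : ContDiff ℝ 3 u)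
    (x : EuclideanSpace ℝ (Fin N)) (hx : gradient u x ≠ 0) :
    ‖gradient u x‖ ^ 2 * FrobSq (fderiv ℝ (NGrad u) x)
      = FrobSq (fderiv ℝ (gradient u) x) - ‖gradient (fun z => ‖gradient u z‖) x‖ ^ 2 := by
  have hG : DifferentiableAt ℝ (gradient u) x := (s5_Gcd hu).differentiable (by norm_num) x
  have hv : DifferentiableAt ℝ (fun z => ‖gradient u z‖) x := hG.norm ℝ hx
  have hV : DifferentiableAt ℝ (NGrad u) x := (hv.inv (norm_ne_zero_iff.2 hx)).smul hG
  have hnear : ∀ᶠ y in nhds x, gradient u y ≠ 0 := hG.continuousAt.eventually_ne hx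
  have e1 : gradient u =ᶠ[nhds x] fun y => ‖gradient u y‖ • NGrad u y := by
    filter_upwards [hnear] with y hy
    rw [NGrad, smul_smul, mul_inv_cancel₀ (norm_ne_zero_iff.2 hy), one_smul]
  have hV1 : ∀ y, gradient u y ≠ 0 → ‖NGrad u y‖ = 1 := by
    intro y hy
    rw [NGrad, norm_smul, norm_inv, norm_norm, inv_mul_cancel₀ (norm_ne_zero_iff.2 hy)]
  have e2 : (fun y => ⟪NGrad u y, NGrad u y⟫) =ᶠ[nhds x] fun _ => (1 : ℝ) := by
    filter_upwards [hnear] with y hy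
    rw [real_inner_self_eq_norm_sq, hV1 y hy, one_pow]
  have horth : ∀ w, ⟪NGrad u x, fderiv ℝ (NGrad u) x w⟫ = 0 := by
    intro w
    have h1 := e2.fderiv_eq (𝕜 := ℝ)
    have h2 := fderiv_inner_apply (𝕜 := ℝ) hV hV w
    rw [h1, real_inner_comm (NGrad u x)] at h2
    simp at h2
    linarith
  have hmain : ∀ w, ‖gradient u x‖ ^ 2 * ‖fderiv ℝ (NGrad u) x w‖ ^ 2
      = ‖fderiv ℝ (gradient u) x w‖ ^ 2 - (fderiv ℝ (fun z => ‖gradient u z‖) x w) ^ 2 := by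
    intro w
    have h1 : fderiv ℝ (gradient u) x w = ‖gradient u x‖ • fderiv ℝ (NGrad u) x w
        + (fderiv ℝ (fun z => ‖gradient u z‖) x w) • NGrad u x := by
      rw [e1.fderiv_eq, fderiv_fun_smul hv hV]
      simp
    rw [h1, norm_add_sq_real, real_inner_smul_left, real_inner_smul_right, real_inner_comm, horth,
      norm_smul, norm_smul, hV1 x hx, norm_norm, Real.norm_eq_abs, mul_one, sq_abs]
    ring
  rw [s5_normsq (fun z => ‖gradient u z‖)]
  unfold FrobSq
  rw [Finset.mul_sum, ← Finset.sum_sub_distrib]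
  exact Finset.sum_congr rfl fun i _ => hmain _

lemma s5_zero {N : ℕ} {u : EuclideanSpace ℝ (Fin N) → ℝ}
    (x : EuclideanSpace ℝ (Fin N)) (hx : gradient u x = 0) :
    gradient (fun z => ‖gradient u z‖) x = 0 := by
  have : IsLocalMin (fun z => ‖gradient u z‖) x :=
    Filter.Eventually.of_forall fun y => by simp [hx]
  unfold gradient at *
  rw [this.fderiv_eq_zero, map_zero]

lemma s5_ae {N : ℕ} {u : EuclideanSpace ℝ (Fin N) → ℝ} (hu : ContDiff ℝ 3 u) :
    ∀ᵐ x, gradient u x = 0 → fderiv ℝ (gradient u) x = 0 := by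
  have hm : MeasurableSet {y : EuclideanSpace ℝ (Fin N) | gradient u y = 0} :=
    (isClosed_singleton.preimage (s5_Gcd hu).continuous).measurableSet
  have hA : ApproximatesLinearOn (gradient u) (0 : EuclideanSpace ℝ (Fin N) →L[ℝ] _)
      {y : EuclideanSpace ℝ (Fin N) | gradient u y = 0} 0 := by
    intro x hx y hy
    rw [Set.mem_setOf_eq] at hx hy
    simp [hx, hy]
  have := hA.norm_fderiv_sub_le volume hm (fderiv ℝ (gradient u))
    (fun x _ => ((s5_Gcd hu).differentiable (by norm_num) x).hasFDerivAt.hasFDerivWithinAt)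
  rw [ae_restrict_iff' hm] at this
  filter_upwards [this] with x hx h0
  simpa using hx h0

/-- flat-torus instance of Lemma 3.3. For a periodic `C³` solution of
`Δu + f(u) = 0` and `v = ‖∇u‖`, the second-variation quadratic form at `v` satisfies
`∫_Q (‖∇v‖² − f'(u) v²) = −∫_{Q∩U} ‖∇u‖² ‖DV‖_F²`. -/
theorem statement5 {N : ℕ} (hN : 1 ≤ N) (L : Fin N → ℝ) (hL : ∀ i, 0 < L i)
    (f : ℝ → ℝ) (hf : ContDiff ℝ 1 f)
    (u : EuclideanSpace ℝ (Fin N) → ℝ) (hu : ContDiff ℝ 3 u)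
    (hper : ∀ (x : EuclideanSpace ℝ (Fin N)) (i : Fin N),
      u (x + L i • EuclideanSpace.single i 1) = u x)
    (hpde : ∀ x, Lap u x + f (u x) = 0) :
    (∫ x in {y : EuclideanSpace ℝ (Fin N) | ∀ i, y i ∈ Set.Ico 0 (L i)},
        (‖gradient (fun z => ‖gradient u z‖) x‖ ^ 2 - deriv f (u x) * ‖gradient u x‖ ^ 2)) =
      - ∫ x in {y : EuclideanSpace ℝ (Fin N) | ∀ i, y i ∈ Set.Ico 0 (L i)} ∩
          {y : EuclideanSpace ℝ (Fin N) | gradient u y ≠ 0},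
          ‖gradient u x‖ ^ 2 * FrobSq (fderiv ℝ (NGrad u) x) := by
  obtain ⟨n, rfl⟩ : ∃ n, N = n + 1 := ⟨N - 1, by omega⟩
  have hG := s5_Gcd hu
  have hGc : Continuous (gradient u) := hG.continuous
  have hDG : Continuous (fderiv ℝ (gradient u)) := hG.continuous_fderiv (by norm_num)
  have hF : Continuous (fun x => FrobSq (fderiv ℝ (gradient u) x)) := by
    unfold FrobSq; fun_prop
  have hdf : Continuous (fun x => deriv f (u x)) :=
    (hf.continuous_deriv (by norm_num)).comp hu.continuous
  have hUm : MeasurableSet {y : EuclideanSpace ℝ (Fin (n+1)) | gradient u y ≠ 0} :=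
    (isOpen_ne.preimage hGc).measurableSet
  have hFnn : ∀ A : EuclideanSpace ℝ (Fin (n+1)) →L[ℝ] EuclideanSpace ℝ (Fin (n+1)),
      0 ≤ FrobSq A := fun A => Finset.sum_nonneg fun i _ => by positivity
  have key := s5_main L hL f hf u hu hper hpde
  simp only [← s5_frobG hu, ← s5_normsq] at key
  set v : EuclideanSpace ℝ (Fin (n+1)) → ℝ := fun z => ‖gradient u z‖ with hvdef
  have hvm : Measurable (fun x => ‖gradient v x‖ ^ 2) := by
    simp only [s5_normsq]
    exact Finset.measurable_sum _ fun i _ => (measurable_fderiv_apply_const ℝ v _).pow_const 2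
  have hle : ∀ x, ‖gradient v x‖ ^ 2 ≤ FrobSq (fderiv ℝ (gradient u) x) := by
    intro x
    by_cases hx : gradient u x = 0
    · rw [s5_zero x hx]; simpa using hFnn _
    · have h1 := s5_pt hu x hx
      have h2 := mul_nonneg (sq_nonneg ‖gradient u x‖) (hFnn (fderiv ℝ (NGrad u) x))
      linarith
  have hiF : IntegrableOn (fun x => FrobSq (fderiv ℝ (gradient u) x)) (s5box L) :=
    s5_integrable L _ hF
  have hiv : IntegrableOn (fun x => ‖gradient v x‖ ^ 2) (s5box L) := by
    refine Integrable.mono' hiF hvm.aestronglyMeasurable (Filter.Eventually.of_forall fun x => ?_)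
    rw [Real.norm_of_nonneg (by positivity)]
    exact hle x
  have hif : IntegrableOn (fun x => deriv f (u x) * ‖gradient u x‖ ^ 2) (s5box L) :=
    s5_integrable L _ (by fun_prop)
  have hR : ∫ x in s5box L ∩ {y : EuclideanSpace ℝ (Fin (n+1)) | gradient u y ≠ 0},
      ‖gradient u x‖ ^ 2 * FrobSq (fderiv ℝ (NGrad u) x)
      = ∫ x in s5box L, (FrobSq (fderiv ℝ (gradient u) x) - ‖gradient v x‖ ^ 2) := by
    rw [← setIntegral_indicator hUm]
    refine integral_congr_ae (ae_restrict_of_ae ?_)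
    filter_upwards [s5_ae hu] with x hx
    by_cases h0 : gradient u x = 0
    · rw [Set.indicator_of_notMem (by simpa using h0), hx h0, s5_zero x h0]
      simp [FrobSq]
    · rw [Set.indicator_of_mem (by simpa using h0), s5_pt hu x h0]
  show ∫ x in s5box L, (‖gradient v x‖ ^ 2 - deriv f (u x) * ‖gradient u x‖ ^ 2) = - ∫ x in s5box L ∩ _, _
  rw [hR, integral_sub hiF hiv, integral_sub hiv hif]
  rw [integral_sub hiF hif] at key
  linarith
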